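/- arXiv:2002.12452 — 2 statements merged into one kernel-verified Lean document; each statement's English description precedes it below -/
import Mathlib

section
/- For every finite-dimensional real or complex inner product space H with dim H ≥ 2, the ortholattice of all linear subspaces of H (ordered by inclusion, with meet = intersection, join = sum, and orthogonal complement as orthocomplementation) does not admit a finite universal test set. -/
/-- Ortholattice terms in the operations ∧, ∨, ', 0, 1 with variables indexed by ℕ. -/
inductive OLTerm : Type
  | var : ℕ → OLTerm
  | zero : OLTerm
  | one : OLTerm
  | inf : OLTerm → OLTerm → OLTerm
  | sup : OLTerm → OLTerm → OLTerm
  | compl : OLTerm → OLTerm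

/-- Evaluation of an ortholattice term in the ortholattice of all linear subspaces of an
inner product space: meet = intersection, join = sum, ' = orthogonal complement,
0 = zero subspace, 1 = whole space. -/
noncomputable def OLTerm.evalSub {𝕜 : Type*} [RCLike 𝕜] {H : Type*} [NormedAddCommGroup H]
    [InnerProductSpace 𝕜 H] (v : ℕ → Submodule 𝕜 H) : OLTerm → Submodule 𝕜 H
  | var i => v i
  | zero => ⊥
  | one => ⊤
  | inf t s => t.evalSub v ⊓ s.evalSub v
  | sup t s => t.evalSub v ⊔ s.evalSub v
  | compl t => (t.evalSub v)ᗮ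


/-! In an ortholattice the commutator of an element with itself is `0`. For two distinct lines that
are not orthogonal to each other, the commutator is instead the plane they span: each line is not
contained in the hyperplane orthogonal to the other, and the two hyperplanes are distinct. Hence the
orthocomplement of the meet of the commutators of all pairs from `n` variables evaluates to `1` as
soon as two variables agree, which is forced when they take fewer than `n` values. It does not
evaluate to `1` at the lines spanned by `e + k f` for orthonormal `e`, `f` and natural `k`, because
no two of these are orthogonal and any two of them span the same plane. -/

open Module Submodule

section InnerProductSpace

variable {𝕜 H : Type*} [RCLike 𝕜] [NormedAddCommGroup H] [InnerProductSpace 𝕜 H]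

theorem hasOrthogonalProjection_of_isAtom {A : Submodule 𝕜 H} (hA : IsAtom A) :
    A.HasOrthogonalProjection := by
  obtain ⟨x, -, rfl⟩ := (atom_iff_nonzero_span A).1 hA
  infer_instance

theorem isCoatom_orthogonal_of_isAtom {A : Submodule 𝕜 H} (hA : IsAtom A) : IsCoatom Aᗮ :=
  have := hasOrthogonalProjection_of_isAtom hA
  (isCompl_orthogonal A).symm.isCoatom_iff_isAtom.2 hA

theorem sup_orthogonal_eq_top_of_not_isOrtho {A B : Submodule 𝕜 H} (hB : IsAtom B)
    (hAB : ¬ A ⟂ B) : A ⊔ Bᗮ = ⊤ :=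
  ((isCoatom_orthogonal_of_isAtom hB).not_le_iff_codisjoint.1 hAB).symm.eq_top

theorem orthogonal_sup_orthogonal_eq_top_of_isAtom {A B : Submodule 𝕜 H} (hA : IsAtom A)
    (hB : IsAtom B) (hAB : A ≠ B) : Aᗮ ⊔ Bᗮ = ⊤ := by
  have := hasOrthogonalProjection_of_isAtom hA
  have := hasOrthogonalProjection_of_isAtom hB
  have orthogonal_ne : Aᗮ ≠ Bᗮ := fun h ↦ hAB <| by
    rw [← orthogonal_orthogonal A, h, orthogonal_orthogonal]
  exact (isCoatom_orthogonal_of_isAtom hA).sup_eq_top_of_ne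
    (isCoatom_orthogonal_of_isAtom hB) orthogonal_ne

theorem exists_orthonormal_of_le_rank {n : ℕ} (hn : n ≤ Module.rank 𝕜 H) :
    ∃ u : Fin n → H, Orthonormal 𝕜 u :=
  let ⟨_, hw⟩ := le_rank_iff.1 hn
  ⟨_, InnerProductSpace.gramSchmidtNormed_orthonormal hw⟩

/-- The line of slope `k` in the coordinate plane of `e` and `f`. Slopes are restricted to `ℕ` so
that no product of two of them is `-1`, i.e. no two such lines are orthogonal. -/
def slopeLine (𝕜 : Type*) {H : Type*} [RCLike 𝕜] [NormedAddCommGroup H] [InnerProductSpace 𝕜 H]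
    (e f : H) (k : ℕ) : Submodule 𝕜 H :=
  span 𝕜 {e + (k : 𝕜) • f}

variable {e f : H}

theorem mem_slopeLine (e f : H) (k : ℕ) : e + (k : 𝕜) • f ∈ slopeLine 𝕜 e f k :=
  mem_span_singleton_self _

theorem left_mem_slopeLine_sup (e f : H) {i j : ℕ} (hij : i ≠ j) :
    e ∈ slopeLine 𝕜 e f i ⊔ slopeLine 𝕜 e f j := by
  have hsub : (i : 𝕜) - j ≠ 0 := sub_ne_zero.2 (Nat.cast_injective.ne hij)
  have combination : (i - j : 𝕜) • e =
      -(j : 𝕜) • (e + (i : 𝕜) • f) + (i : 𝕜) • (e + (j : 𝕜) • f) := by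
    module
  rw [← smul_mem_iff _ hsub, combination]
  exact add_mem_sup (smul_mem _ _ (mem_slopeLine e f i)) (smul_mem _ _ (mem_slopeLine e f j))

theorem isAtom_slopeLine (hef : LinearIndependent 𝕜 ![e, f]) (k : ℕ) :
    IsAtom (slopeLine 𝕜 e f k) :=
  nonzero_span_atom _ fun h ↦
    one_ne_zero (LinearIndependent.pair_iff.1 hef 1 k (by rwa [one_smul])).1

theorem slopeLine_injective (hef : LinearIndependent 𝕜 ![e, f]) :
    Function.Injective (slopeLine 𝕜 e f) := fun i j h ↦ by
  have mem_line : e + (j : 𝕜) • f ∈ slopeLine 𝕜 e f i := h ▸ mem_slopeLine e f j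
  obtain ⟨c, hc⟩ := mem_span_singleton.1 mem_line
  obtain ⟨hc_one, hci⟩ : c = 1 ∧ c * i = j :=
    hef.eq_of_pair (by rw [one_smul, ← hc]; module)
  simpa [hc_one] using hci

theorem inner_add_smul_add_smul (hef : Orthonormal 𝕜 ![e, f]) (a b : 𝕜) :
    inner 𝕜 (e + a • f) (e + b • f) = 1 + starRingEnd 𝕜 a * b := by
  have he : ‖e‖ = 1 := hef.1 0
  have hf : ‖f‖ = 1 := hef.1 1
  have inner_left_right : inner 𝕜 e f = 0 := hef.inner_eq_zero zero_ne_one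
  have inner_right_left : inner 𝕜 f e = 0 := hef.inner_eq_zero one_ne_zero
  simp [inner_add_left, inner_add_right, inner_smul_left, inner_smul_right, he, hf,
    inner_left_right, inner_right_left, mul_comm]

theorem not_isOrtho_slopeLine (hef : Orthonormal 𝕜 ![e, f]) (i j : ℕ) :
    ¬ slopeLine 𝕜 e f i ⟂ slopeLine 𝕜 e f j := fun h ↦ by
  have inner_eq_zero := h.inner_eq (mem_slopeLine e f i) (mem_slopeLine e f j)
  rw [inner_add_smul_add_smul hef, map_natCast] at inner_eq_zero
  norm_cast at inner_eq_zero
  lia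

end InnerProductSpace

namespace OLTerm

/-- The ortholattice commutator of two terms: in an orthomodular lattice it takes the value `0`
exactly at pairs of commuting elements. -/
def commutator (s t : OLTerm) : OLTerm :=
  inf (inf (sup s t) (sup s (compl t))) (inf (sup (compl s) t) (sup (compl s) (compl t)))

/-- The meet of a finite family of terms, bracketed in an arbitrary order. -/
noncomputable def finsetInf {ι : Type*} (S : Finset ι) (t : ι → OLTerm) : OLTerm :=
  (S.toList.map t).foldr inf one

/-- A term in the variables `0, …, n - 1` that evaluates to `1` whenever two of them agree. -/
noncomputable def pigeonhole (n : ℕ) : OLTerm :=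
  compl (finsetInf (Finset.range n).offDiag fun p ↦ commutator (var p.1) (var p.2))

variable {𝕜 H : Type*} [RCLike 𝕜] [NormedAddCommGroup H] [InnerProductSpace 𝕜 H]
  {v : ℕ → Submodule 𝕜 H}

theorem evalSub_commutator_eq_bot {s t : OLTerm} (h : s.evalSub v = t.evalSub v) :
    (commutator s t).evalSub v = ⊥ := by
  simp only [commutator, evalSub, h, sup_idem]
  exact ((orthogonal_disjoint _).mono inf_le_left inf_le_right).eq_bot

theorem evalSub_commutator_of_isAtom {s t : OLTerm} (hs : IsAtom (s.evalSub v))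
    (ht : IsAtom (t.evalSub v)) (hne : s.evalSub v ≠ t.evalSub v)
    (hst : ¬ s.evalSub v ⟂ t.evalSub v) :
    (commutator s t).evalSub v = s.evalSub v ⊔ t.evalSub v := by
  have left_sup : s.evalSub v ⊔ (t.evalSub v)ᗮ = ⊤ := sup_orthogonal_eq_top_of_not_isOrtho ht hst
  have sup_right : (s.evalSub v)ᗮ ⊔ t.evalSub v = ⊤ := by
    rw [sup_comm]
    exact sup_orthogonal_eq_top_of_not_isOrtho hs fun h ↦ hst h.symm
  simp only [commutator, evalSub, left_sup, sup_right,
    orthogonal_sup_orthogonal_eq_top_of_isAtom hs ht hne, inf_top_eq]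

theorem evalSub_finsetInf {ι : Type*} (S : Finset ι) (t : ι → OLTerm) :
    (finsetInf S t).evalSub v = ⨅ i ∈ S, (t i).evalSub v := by
  have evalSub_foldr (l : List ι) :
      ((l.map t).foldr inf one).evalSub v = ⨅ i ∈ l, (t i).evalSub v := by
    induction l with
    | nil => simp [evalSub]
    | cons i l ih => simp [evalSub, ih, iInf_or, iInf_inf_eq]
  simp only [finsetInf, evalSub_foldr, Finset.mem_toList]

theorem evalSub_pigeonhole (n : ℕ) :
    (pigeonhole n).evalSub v =
      (⨅ p ∈ (Finset.range n).offDiag, (commutator (var p.1) (var p.2)).evalSub v)ᗮ := by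
  rw [pigeonhole, evalSub, evalSub_finsetInf]

theorem evalSub_pigeonhole_eq_top {n : ℕ} (hv : ¬ Set.InjOn v (Finset.range n)) :
    (pigeonhole n).evalSub v = ⊤ := by
  obtain ⟨i, hi, j, hj, hvij, hij⟩ : ∃ i ∈ Finset.range n, ∃ j ∈ Finset.range n,
      v i = v j ∧ i ≠ j := by
    simpa [Set.InjOn] using hv
  have commutator_eq_bot : (commutator (var i) (var j)).evalSub v = ⊥ :=
    evalSub_commutator_eq_bot hvij
  rw [evalSub_pigeonhole, orthogonal_eq_top_iff, eq_bot_iff, ← commutator_eq_bot]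
  exact iInf₂_le (i, j) (Finset.mem_offDiag.2 ⟨hi, hj, hij⟩)

theorem evalSub_pigeonhole_slopeLine_ne_top {e f : H} (hef : Orthonormal 𝕜 ![e, f])
    (n : ℕ) : (pigeonhole n).evalSub (slopeLine 𝕜 e f) ≠ ⊤ := by
  rw [evalSub_pigeonhole, Ne, orthogonal_eq_top_iff]
  refine (Submodule.ne_bot_iff _).2 ⟨e, ?_, hef.ne_zero 0⟩
  simp only [mem_iInf]
  rintro ⟨i, j⟩ hp
  have hij : i ≠ j := (Finset.mem_offDiag.1 hp).2.2
  have hlin : LinearIndependent 𝕜 ![e, f] := hef.linearIndependent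
  have commutator_eq : (commutator (var i) (var j)).evalSub (slopeLine 𝕜 e f) =
      slopeLine 𝕜 e f i ⊔ slopeLine 𝕜 e f j :=
    evalSub_commutator_of_isAtom (isAtom_slopeLine hlin i) (isAtom_slopeLine hlin j)
      ((slopeLine_injective hlin).ne hij) (not_isOrtho_slopeLine hef i j)
  rw [commutator_eq]
  exact left_mem_slopeLine_sup e f hij

end OLTerm

theorem stmt1_general (𝕜 : Type*) [RCLike 𝕜] (H : Type*) [NormedAddCommGroup H]
    [InnerProductSpace 𝕜 H] (hrank : 2 ≤ Module.rank 𝕜 H) :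
    ¬ ∃ T : Set (Submodule 𝕜 H), T.Finite ∧
      ∀ t : OLTerm, (∀ v : ℕ → Submodule 𝕜 H, (∀ i, v i ∈ T) → t.evalSub v = ⊤) →
        ∀ v : ℕ → Submodule 𝕜 H, t.evalSub v = ⊤ := by
  rintro ⟨T, hT, universal⟩
  obtain ⟨u, hu⟩ := exists_orthonormal_of_le_rank (n := 2) hrank
  have hpair : Orthonormal 𝕜 ![u 0, u 1] := by rwa [← FinVec.etaExpand_eq u] at hu
  refine OLTerm.evalSub_pigeonhole_slopeLine_ne_top hpair (hT.toFinset.card + 1)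
    (universal _ (fun v hv ↦ OLTerm.evalSub_pigeonhole_eq_top fun hinj ↦ ?_) _)
  have card_le := Finset.card_le_card_of_injOn v (t := hT.toFinset)
    (fun i _ ↦ by simpa using hv i) hinj
  simp at card_le

/-- For every finite dimensional real or complex inner product space `H` with `dim H ≥ 2`,
the ortholattice of all linear subspaces of `H` does not admit a finite universal test set. -/
theorem stmt1 (𝕜 : Type*) [RCLike 𝕜] (H : Type*) [NormedAddCommGroup H]
    [InnerProductSpace 𝕜 H] [FiniteDimensional 𝕜 H] (hdim : 2 ≤ Module.finrank 𝕜 H) :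
    ¬ ∃ T : Set (Submodule 𝕜 H), T.Finite ∧
      ∀ t : OLTerm, (∀ v : ℕ → Submodule 𝕜 H, (∀ i, v i ∈ T) → t.evalSub v = ⊤) →
        ∀ v : ℕ → Submodule 𝕜 H, t.evalSub v = ⊤ := by
  exact stmt1_general 𝕜 H (by rw [← finrank_eq_rank]; exact_mod_cast hdim)
end

section
/- Let L be a modular ortholattice and a ∈ L. Then the set S = [0,a] ∪ [a',1] is a sub-ortholattice of L (closed under ∧, ∨, ', and containing 0,1), and the map x ↦ x ∧ a is a surjective ortholattice homomorphism from S onto the modular ortholattice [0,a] with relative orthocomplementation y ↦ y' ∧ a: it preserves meets and joins, sends 0 to 0 and 1 to a, and sends x' to ((x ∧ a)' ∧ a) for all x ∈ S. -/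
/-- An ortholattice: a bounded lattice with an order-reversing involution `x ↦ x′`
satisfying `x ⊓ x′ = ⊥` and `x ⊔ x′ = ⊤`. -/
class Ortholattice (α : Type*) extends Lattice α, BoundedOrder α where
  compl : α → α
  compl_antitone : ∀ x y : α, x ≤ y → compl y ≤ compl x
  compl_compl : ∀ x : α, compl (compl x) = x
  inf_compl : ∀ x : α, x ⊓ compl x = ⊥
  sup_compl : ∀ x : α, x ⊔ compl x = ⊤

postfix:max "′" => Ortholattice.compl

/-!
In an orthomodular lattice `x ↦ x ⊓ a` is a homomorphism on the elements commuting with `a`, that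
is, those splitting as `x = (x ⊓ a) ⊔ (x ⊓ a′)`: the `a`-parts of a join are joined separately from
the `a′`-parts, and the orthomodular law says that meeting with `a` erases what lies below `a′`.
Every element below `a` or above `a′` commutes with `a`, and a modular ortholattice is orthomodular.
-/

theorem supClosed_Iic_union_Ici {α : Type*} [SemilatticeSup α] (a b : α) :
    SupClosed (Set.Iic a ∪ Set.Ici b) := by
  rintro x (hx | hx) y (hy | hy)
  · exact Or.inl (sup_le hx hy)
  · exact Or.inr (le_sup_of_le_right hy)
  · exact Or.inr (le_sup_of_le_left hx)
  · exact Or.inr (le_sup_of_le_left hx)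

theorem infClosed_Iic_union_Ici {α : Type*} [SemilatticeInf α] (a b : α) :
    InfClosed (Set.Iic a ∪ Set.Ici b) := by
  rintro x (hx | hx) y (hy | hy)
  · exact Or.inl (inf_le_of_left_le hx)
  · exact Or.inl (inf_le_of_left_le hx)
  · exact Or.inl (inf_le_of_right_le hy)
  · exact Or.inr (le_inf hx hy)

/-- An orthomodular lattice: an ortholattice in which `x ≤ y` implies `y = x ⊔ (x′ ⊓ y)`. It is the
weakening of modularity under which the projections `x ↦ x ⊓ a` are studied here. -/
class IsOrthomodularLattice (α : Type*) [Ortholattice α] : Prop where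
  sup_compl_inf_eq_of_le : ∀ {x y : α}, x ≤ y → x ⊔ x′ ⊓ y = y

namespace Ortholattice

variable {α : Type*} [Ortholattice α] {a p q x y : α}

instance [IsModularLattice α] : IsOrthomodularLattice α where
  sup_compl_inf_eq_of_le {x y} hxy := by
    rw [← sup_inf_assoc_of_le x′ hxy, sup_compl, top_inf_eq]

theorem le_compl_comm : x ≤ y′ ↔ y ≤ x′ := by
  have swap {u v : α} (h : u ≤ v′) : v ≤ u′ := by
    simpa only [compl_compl] using compl_antitone _ _ h
  exact ⟨swap, swap⟩

theorem compl_le_comm : x′ ≤ y ↔ y′ ≤ x := by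
  have swap {u v : α} (h : u′ ≤ v) : v′ ≤ u := by
    simpa only [compl_compl] using compl_antitone _ _ h
  exact ⟨swap, swap⟩

theorem compl_sup (x y : α) : (x ⊔ y)′ = x′ ⊓ y′ :=
  eq_of_forall_le_iff fun z => by
    rw [le_compl_comm, sup_le_iff, le_inf_iff, le_compl_comm, le_compl_comm (x := y)]

theorem compl_mem_Iic_union_Ici_compl (hx : x ∈ Set.Iic a ∪ Set.Ici a′) :
    x′ ∈ Set.Iic a ∪ Set.Ici a′ :=
  hx.symm.imp compl_le_comm.mp (compl_antitone x a)

/-- The commutation relation of ortholattice theory: `x` commutes with `a` if it is the join of its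
parts below `a` and below `a′`. On such elements `x ↦ x ⊓ a` respects the operations. -/
def Commutes (x a : α) : Prop :=
  x = (x ⊓ a) ⊔ (x ⊓ a′)

theorem commutes_of_le (hx : x ≤ a) : Commutes x a := by
  rw [Commutes, inf_eq_left.mpr hx, sup_of_le_left inf_le_left]

theorem Commutes.compl_inf (hx : Commutes x a) : x′ ⊓ a = (x ⊓ a)′ ⊓ a := by
  refine le_antisymm (inf_le_inf_right a (compl_antitone _ _ inf_le_left))
    (le_inf ?_ inf_le_right)
  have ha : a ≤ (x ⊓ a′)′ := le_compl_comm.mp inf_le_right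
  calc (x ⊓ a)′ ⊓ a ≤ (x ⊓ a)′ ⊓ (x ⊓ a′)′ := inf_le_inf_left _ ha
    _ = ((x ⊓ a) ⊔ (x ⊓ a′))′ := (compl_sup _ _).symm
    _ = x′ := congrArg compl hx.symm

section Orthomodular

variable [IsOrthomodularLattice α]

theorem commutes_of_compl_le (hx : a′ ≤ x) : Commutes x a := by
  have split : a′ ⊔ a ⊓ x = x := by
    simpa only [compl_compl] using IsOrthomodularLattice.sup_compl_inf_eq_of_le hx
  rw [Commutes, inf_eq_right.mpr hx, sup_comm, inf_comm, split]

theorem commutes_of_mem_Iic_union_Ici_compl (hx : x ∈ Set.Iic a ∪ Set.Ici a′) : Commutes x a :=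
  hx.elim commutes_of_le commutes_of_compl_le

-- This is the order dual of the orthomodular law.
theorem sup_compl_inf_self_of_le (hp : p ≤ a) : (p ⊔ a′) ⊓ a = p := by
  have law : a′ ⊔ a′′ ⊓ p′ = p′ :=
    IsOrthomodularLattice.sup_compl_inf_eq_of_le (compl_antitone p a hp)
  calc (p ⊔ a′) ⊓ a = (a′ ⊔ a′′ ⊓ p′)′ := by
        rw [← compl_sup, compl_sup, compl_compl, compl_compl, inf_comm, sup_comm]
    _ = p := by rw [law, compl_compl]

theorem sup_inf_eq_left_of_le_compl (hp : p ≤ a) (hq : q ≤ a′) : (p ⊔ q) ⊓ a = p := by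
  refine le_antisymm ?_ (le_inf le_sup_left hp)
  calc (p ⊔ q) ⊓ a ≤ (p ⊔ a′) ⊓ a := inf_le_inf_right a (sup_le_sup_left hq p)
    _ = p := sup_compl_inf_self_of_le hp

theorem Commutes.sup_inf (hx : Commutes x a) (hy : Commutes y a) :
    (x ⊔ y) ⊓ a = (x ⊓ a) ⊔ (y ⊓ a) := by
  have split : x ⊔ y = ((x ⊓ a) ⊔ (y ⊓ a)) ⊔ ((x ⊓ a′) ⊔ (y ⊓ a′)) := by
    rw [sup_sup_sup_comm, ← hx, ← hy]
  rw [split]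
  exact sup_inf_eq_left_of_le_compl (sup_le inf_le_right inf_le_right)
    (sup_le inf_le_right inf_le_right)

end Orthomodular

end Ortholattice

open Ortholattice in
theorem stmt4_general {α : Type*} [Ortholattice α] [IsOrthomodularLattice α] (a : α)
    (S : Set α) (hS : S = Set.Iic a ∪ Set.Ici a′) :
    (⊥ : α) ∈ S ∧ (⊤ : α) ∈ S ∧
    (∀ x ∈ S, ∀ y ∈ S, x ⊓ y ∈ S ∧ x ⊔ y ∈ S) ∧
    (∀ x ∈ S, x′ ∈ S) ∧
    (∀ x ∈ S, x ⊓ a ≤ a) ∧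
    (∀ y : α, y ≤ a → ∃ x ∈ S, x ⊓ a = y) ∧
    (∀ x ∈ S, ∀ y ∈ S, (x ⊓ y) ⊓ a = (x ⊓ a) ⊓ (y ⊓ a) ∧ (x ⊔ y) ⊓ a = (x ⊓ a) ⊔ (y ⊓ a)) ∧
    ((⊥ : α) ⊓ a = ⊥) ∧ ((⊤ : α) ⊓ a = a) ∧
    (∀ x ∈ S, x′ ⊓ a = (x ⊓ a)′ ⊓ a) := by
  subst hS
  have commutes : ∀ x ∈ Set.Iic a ∪ Set.Ici a′, Commutes x a :=
    fun _ hx => commutes_of_mem_Iic_union_Ici_compl hx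
  refine ⟨Or.inl bot_le, Or.inr le_top, ?closed, ?compl_mem, ?maps_to, ?surjective, ?map_inf_sup,
    bot_inf_eq a, top_inf_eq a, ?map_compl⟩
  case closed =>
    exact fun x hx y hy =>
      ⟨infClosed_Iic_union_Ici a a′ hx hy, supClosed_Iic_union_Ici a a′ hx hy⟩
  case compl_mem => exact fun x hx => compl_mem_Iic_union_Ici_compl hx
  case maps_to => exact fun x _ => inf_le_right
  case surjective => exact fun y hy => ⟨y, Or.inl hy, inf_eq_left.mpr hy⟩
  case map_inf_sup =>
    exact fun x hx y hy =>
      ⟨inf_inf_distrib_right x y a, (commutes x hx).sup_inf (commutes y hy)⟩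
  case map_compl => exact fun x hx => (commutes x hx).compl_inf

/-- Let `L` be a modular ortholattice and `a ∈ L`.  Then `S = [⊥,a] ∪ [a′,⊤]` is a
sub-ortholattice of `L`, and `x ↦ x ⊓ a` is a surjective ortholattice homomorphism from `S`
onto the interval `[⊥,a]` with relative orthocomplementation `y ↦ y′ ⊓ a`: it preserves
meets and joins, sends `⊥` to `⊥` and `⊤` to `a`, and sends `x′` to `(x ⊓ a)′ ⊓ a`. -/
theorem stmt4 {α : Type*} [Ortholattice α] [IsModularLattice α] (a : α)
    (S : Set α) (hS : S = {x | x ≤ a} ∪ {x | a′ ≤ x}) :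
    -- S is a sub-ortholattice: contains ⊥, ⊤ and is closed under ⊓, ⊔, ′
    (⊥ : α) ∈ S ∧ (⊤ : α) ∈ S ∧
    (∀ x ∈ S, ∀ y ∈ S, x ⊓ y ∈ S ∧ x ⊔ y ∈ S) ∧
    (∀ x ∈ S, x′ ∈ S) ∧
    -- x ↦ x ⊓ a maps S into [⊥, a] and is surjective onto [⊥, a]
    (∀ x ∈ S, x ⊓ a ≤ a) ∧
    (∀ y : α, y ≤ a → ∃ x ∈ S, x ⊓ a = y) ∧
    -- it preserves meets and joins
    (∀ x ∈ S, ∀ y ∈ S, (x ⊓ y) ⊓ a = (x ⊓ a) ⊓ (y ⊓ a) ∧ (x ⊔ y) ⊓ a = (x ⊓ a) ⊔ (y ⊓ a)) ∧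
    -- it sends ⊥ to ⊥ and ⊤ to a
    ((⊥ : α) ⊓ a = ⊥) ∧ ((⊤ : α) ⊓ a = a) ∧
    -- it sends x′ to the relative orthocomplement of x ⊓ a in [⊥, a]
    (∀ x ∈ S, x′ ⊓ a = (x ⊓ a)′ ⊓ a) :=
  stmt4_general a S hS
end
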